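/- arXiv:1104.0440 — 5 statements merged into one kernel-verified Lean document; each statement's English description precedes it below -/
import Mathlib

section
/- Assume (H). Then every T-periodic solution x of (N) on ℝ with nonconstant sign has the sign of −A·B, i.e., for every t ∈ ℝ: x(t) < 0 whenever A(t)·B(t) > 0, x(t) > 0 whenever A(t)·B(t) < 0, and x(t) = 0 if and only if A(t) = 0. -/
open Set Filter Topology

/-!
Suppose `B > 0` and let the ray of slope `c > 0` leave the time axis at a time `t₁` with
`0 ≤ A t₁` and `0 < x t₁`. If `a ≤ A'` and `|C| ≤ K`, then at a contact of `x` with the ray at time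
`t₁ + s`, `0 < s ≤ T`, the equation forces `x' ≥ a / c + B - T K c`, which exceeds `c` as soon as
`(1 + T K) c² < B c + a`. The discriminant condition `-4 a (1 + T K) < B²` provides such a `c`, so
`x` stays above the ray and has no zero on `[t₁, t₁ + T]`. A solution with a zero in every interval
of length `T` therefore satisfies `x ≤ 0` wherever `0 ≤ A`.

Reversing time changes the signs of `A`, `B`, `C` and preserves `A B`, hence `0 ≤ A B` implies
`x ≤ 0` also when `B < 0`. Replacing `x` by `-x` changes only the sign of `B`, which gives the
opposite sign of `x`.
-/

theorem exists_pos_slope_of_lt_sq {X : Type*} [TopologicalSpace X] {s : Set X} (hs : IsCompact s)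
    (hne : s.Nonempty) {B : X → ℝ} (hB : ContinuousOn B s) (hB_pos : ∀ t ∈ s, 0 < B t)
    {a D : ℝ} (hD : 0 < D) (hdisc : ∀ t ∈ s, -4 * a * D < B t ^ 2) :
    ∃ c > 0, ∀ t ∈ s, D * c ^ 2 < B t * c + a := by
  obtain ⟨u, hu, hmin⟩ := hs.exists_isMinOn hne hB
  -- The vertex of the parabola `D c² - B u c - a`.
  obtain ⟨c, hc⟩ : ∃ c, B u = 2 * D * c := ⟨B u / (2 * D), by field_simp⟩
  have hc_pos : 0 < c := pos_of_mul_pos_right (hc ▸ hB_pos u hu) (by positivity)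
  have hvertex : D * c ^ 2 < B u * c + a := by
    have h := hdisc u hu
    rw [hc] at h ⊢
    have : 0 < D * (D * c ^ 2 + a) := by linarith
    linarith [pos_of_mul_pos_right this hD.le]
  exact ⟨c, hc_pos, fun t ht => hvertex.trans_le (by gcongr; exact hmin ht)⟩

theorem forall_pos_or_forall_neg_of_ne_zero {X : Type*} [TopologicalSpace X] [PreconnectedSpace X]
    {f : X → ℝ} (hf : Continuous f) (hf_ne : ∀ t, f t ≠ 0) : (∀ t, 0 < f t) ∨ ∀ t, f t < 0 := by
  by_contra! h
  obtain ⟨z, hz⟩ := mem_range_of_exists_le_of_exists_ge hf h.1 h.2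
  exact hf_ne z hz

theorem nonpos_of_le_deriv_of_eq {f : ℝ → ℝ} {a r s : ℝ} (hrs : r < s)
    (hf : ContinuousOn f (Icc r s)) (hf' : ∀ t ∈ Ioo r s, a ≤ deriv f t) (heq : f r = f s) :
    a ≤ 0 := by
  obtain ⟨t, ht, hft⟩ := exists_deriv_eq_zero hrs hf heq
  exact (hf' t ht).trans_eq hft

theorem periodic_deriv {𝕜 F : Type*} [NontriviallyNormedField 𝕜] [NormedAddCommGroup F]
    [NormedSpace 𝕜 F] {f : 𝕜 → F} {T : 𝕜} (hper : Function.Periodic f T) :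
    Function.Periodic (deriv f) T := fun t => by
  rw [← deriv_comp_add_const, funext hper]

section Periodic

variable {f : ℝ → ℝ} {T : ℝ}

theorem apply_mem_image_Icc_of_periodic (hper : Function.Periodic f T) (hT : 0 < T) (t : ℝ) :
    f t ∈ f '' Icc 0 T := by
  simpa only [zero_add] using (hper.image_Icc hT 0).ge (mem_range_self t)

theorem csInf_image_Icc_le_of_periodic (hf : Continuous f) (hper : Function.Periodic f T)
    (hT : 0 < T) (t : ℝ) : sInf (f '' Icc 0 T) ≤ f t :=
  csInf_le (isCompact_Icc.image hf).bddBelow (apply_mem_image_Icc_of_periodic hper hT t)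

theorem le_csSup_image_Icc_of_periodic (hf : Continuous f) (hper : Function.Periodic f T)
    (hT : 0 < T) (t : ℝ) : f t ≤ sSup (f '' Icc 0 T) :=
  le_csSup (isCompact_Icc.image hf).bddAbove (apply_mem_image_Icc_of_periodic hper hT t)

theorem sq_csInf_image_abs_Icc_le_of_periodic (hf : Continuous f) (hper : Function.Periodic f T)
    (hT : 0 < T) (t : ℝ) : sInf ((fun s => |f s|) '' Icc 0 T) ^ 2 ≤ f t ^ 2 := by
  have hnonneg : 0 ≤ sInf ((fun s => |f s|) '' Icc 0 T) :=
    Real.sInf_nonneg (forall_mem_image.2 fun s _ => abs_nonneg (f s))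
  rw [← sq_abs (f t)]
  exact pow_le_pow_left₀ hnonneg (csInf_image_Icc_le_of_periodic hf.abs (hper.comp abs) hT t) 2

end Periodic

/-- `x` solves the Abel equation of the second kind `x x' = A + B x + C x²` on the whole real
line. The equation is not divided by `x`, because the solutions of interest have zeros. -/
structure IsAbelSolution (A B C x : ℝ → ℝ) : Prop where
  differentiable : Differentiable ℝ x
  mul_deriv_eq : ∀ t, x t * deriv x t = A t + B t * x t + C t * x t ^ 2

namespace IsAbelSolution

variable {A B C x : ℝ → ℝ} {T K a c t t₁ : ℝ}

theorem constant_coeff_eq_zero (hx : IsAbelSolution A B C x) (ht : x t = 0) : A t = 0 := by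
  simpa [ht] using (hx.mul_deriv_eq t).symm

theorem neg (hx : IsAbelSolution A B C x) :
    IsAbelSolution A (fun t => -B t) C (fun t => -x t) where
  differentiable := hx.differentiable.neg
  mul_deriv_eq t := by
    rw [deriv.fun_neg]
    linear_combination hx.mul_deriv_eq t

theorem comp_neg (hx : IsAbelSolution A B C x) :
    IsAbelSolution (fun t => -A (-t)) (fun t => -B (-t)) (fun t => -C (-t)) (fun t => x (-t)) where
  differentiable := hx.differentiable.comp differentiable_neg
  mul_deriv_eq t := by
    rw [deriv_comp_neg]
    linear_combination -hx.mul_deriv_eq (-t)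

theorem slope_lt_deriv_of_eq_ray (hx : IsAbelSolution A B C x) (hA : Differentiable ℝ A)
    (hA' : ∀ t, a ≤ deriv A t) (hC : |C t| ≤ K) (hc : 0 < c)
    (hslope : (1 + T * K) * c ^ 2 < B t * c + a) (hA₁ : 0 ≤ A t₁) (ht : t ∈ Ioc t₁ (t₁ + T))
    (hcontact : x t = c * (t - t₁)) : c < deriv x t := by
  have hs : 0 < t - t₁ := sub_pos.2 ht.1
  have hsT : t - t₁ ≤ T := sub_le_iff_le_add'.2 ht.2
  have hK : 0 ≤ K := (abs_nonneg _).trans hC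
  have hA_ge : a * (t - t₁) ≤ A t := by
    linarith [mul_sub_le_image_sub_of_le_deriv hA hA' ht.1.le]
  have hC_ge : -(T * K * c ^ 2 * (t - t₁)) ≤ C t * x t ^ 2 :=
    calc -(T * K * c ^ 2 * (t - t₁)) ≤ -((t - t₁) * K * c ^ 2 * (t - t₁)) := by gcongr
      _ = -K * x t ^ 2 := by rw [hcontact]; ring
      _ ≤ C t * x t ^ 2 := by gcongr; exact neg_le_of_abs_le hC
  refine lt_of_mul_lt_mul_left (a := x t) ?_ (by rw [hcontact]; positivity)
  calc x t * c = c ^ 2 * (t - t₁) := by rw [hcontact]; ring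
    _ < (B t * c + a - T * K * c ^ 2) * (t - t₁) := by gcongr; linarith
    _ = a * (t - t₁) + B t * x t - T * K * c ^ 2 * (t - t₁) := by rw [hcontact]; ring
    _ ≤ A t + B t * x t + C t * x t ^ 2 := by linarith
    _ = x t * deriv x t := (hx.mul_deriv_eq t).symm

theorem ray_le (hx : IsAbelSolution A B C x) (hA : Differentiable ℝ A)
    (hA' : ∀ t, a ≤ deriv A t) (hC : ∀ t, |C t| ≤ K) (hc : 0 < c)
    (hslope : ∀ t ∈ Icc t₁ (t₁ + T), (1 + T * K) * c ^ 2 < B t * c + a)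
    (hA₁ : 0 ≤ A t₁) (hx₁ : 0 < x t₁) (ht : t ∈ Icc t₁ (t₁ + T)) : c * (t - t₁) ≤ x t := by
  have hray (s : ℝ) : HasDerivAt (fun s => c * (s - t₁)) c s := by
    simpa using ((hasDerivAt_id s).sub_const t₁).const_mul c
  refine image_le_of_deriv_right_lt_deriv_boundary (f := fun s => c * (s - t₁)) (f' := fun _ => c)
    (by fun_prop) (fun s _ => (hray s).hasDerivWithinAt) (by simpa using hx₁.le)
    (fun s => (hx.differentiable s).hasDerivAt) (fun s hs hcontact => ?_) ht
  have hs_ne : t₁ ≠ s := by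
    rintro rfl
    simp only [sub_self, mul_zero] at hcontact
    exact hx₁.ne hcontact
  exact hx.slope_lt_deriv_of_eq_ray hA hA' (hC s) hc (hslope s (Ico_subset_Icc_self hs)) hA₁
    ⟨hs.1.lt_of_ne hs_ne, hs.2.le⟩ hcontact.symm

theorem pos_of_pos_of_mem_Icc (hx : IsAbelSolution A B C x) (hA : Differentiable ℝ A)
    (hA' : ∀ t, a ≤ deriv A t) (hB : Continuous B) (hB_pos : ∀ t, 0 < B t)
    (hC : ∀ t, |C t| ≤ K) (hdisc : ∀ t, -4 * a * (1 + T * K) < B t ^ 2)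
    (hA₁ : 0 ≤ A t₁) (hx₁ : 0 < x t₁) (ht : t ∈ Icc t₁ (t₁ + T)) : 0 < x t := by
  have hT : 0 ≤ T := by linarith [ht.1, ht.2]
  have hK : 0 ≤ K := (abs_nonneg _).trans (hC t)
  obtain ⟨c, hc, hslope⟩ := exists_pos_slope_of_lt_sq isCompact_Icc ⟨t, ht⟩ hB.continuousOn
    (fun s _ => hB_pos s) (by positivity : 0 < 1 + T * K) (fun s _ => hdisc s)
  rcases ht.1.eq_or_lt with rfl | hlt
  · exact hx₁
  · exact (mul_pos hc (sub_pos.2 hlt)).trans_le (hx.ray_le hA hA' hC hc hslope hA₁ hx₁ ht)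

theorem nonpos_of_coeff_nonneg (hx : IsAbelSolution A B C x) (hA : Differentiable ℝ A)
    (hA' : ∀ t, a ≤ deriv A t) (hB : Continuous B) (hB_pos : ∀ t, 0 < B t)
    (hC : ∀ t, |C t| ≤ K) (hdisc : ∀ t, -4 * a * (1 + T * K) < B t ^ 2)
    (hzero : ∃ s ∈ Icc t (t + T), x s = 0) (ht : 0 ≤ A t) : x t ≤ 0 := by
  by_contra! hxt
  obtain ⟨s, hs, hxs⟩ := hzero
  exact (hx.pos_of_pos_of_mem_Icc hA hA' hB hB_pos hC hdisc ht hxt hs).ne' hxs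

theorem nonpos_of_mul_coeff_nonneg (hx : IsAbelSolution A B C x) (hA : Differentiable ℝ A)
    (hA' : ∀ t, a ≤ deriv A t) (hB : Continuous B) (hB_ne : ∀ t, B t ≠ 0)
    (hC : ∀ t, |C t| ≤ K) (hdisc : ∀ t, -4 * a * (1 + T * K) < B t ^ 2)
    (hzero : ∀ t, ∃ s ∈ Icc t (t + T), x s = 0) (ht : 0 ≤ A t * B t) : x t ≤ 0 := by
  rcases forall_pos_or_forall_neg_of_ne_zero hB hB_ne with hB_pos | hB_neg
  · exact hx.nonpos_of_coeff_nonneg hA hA' hB hB_pos hC hdisc (hzero t)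
      (nonneg_of_mul_nonneg_left ht (hB_pos t))
  · have hzero' : ∃ s ∈ Icc (-t) (-t + T), x (-s) = 0 := by
      obtain ⟨s, hs, hxs⟩ := hzero (t - T)
      exact ⟨-s, ⟨by linarith [hs.2], by linarith [hs.1]⟩, by rwa [neg_neg]⟩
    have hA_deriv (s : ℝ) : deriv (fun u => -A (-u)) s = deriv A (-s) := by
      rw [deriv.fun_neg, deriv_comp_neg, neg_neg]
    have hAt : A t ≤ 0 := nonpos_of_mul_nonneg_left ht (hB_neg t)
    simpa only [neg_neg] using hx.comp_neg.nonpos_of_coeff_nonneg (t := -t) (by fun_prop)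
      (fun s => (hA' (-s)).trans_eq (hA_deriv s).symm) (by fun_prop)
      (fun s => neg_pos.2 (hB_neg (-s))) (fun s => (abs_neg _).trans_le (hC (-s)))
      (fun s => (hdisc (-s)).trans_eq (neg_sq _).symm) hzero' (by simpa using hAt)

theorem linear_coeff_ne_zero (hx : IsAbelSolution A B C x) (hA : Differentiable ℝ A)
    (hA' : ∀ t, a ≤ deriv A t) (hC : |C t| ≤ K) (hdisc : -4 * a * (1 + T * K) < B t ^ 2)
    (hzero : ∀ t, ∃ s ∈ Icc t (t + T), x s = 0) : B t ≠ 0 := by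
  obtain ⟨r, hr, hxr⟩ := hzero 0
  obtain ⟨s, hs, hxs⟩ := hzero (0 + T + 1)
  have hT : 0 ≤ T := by linarith [hr.1, hr.2]
  have hK : 0 ≤ K := (abs_nonneg _).trans hC
  have ha : a ≤ 0 := nonpos_of_le_deriv_of_eq (by linarith [hr.2, hs.1] : r < s)
    hA.continuous.continuousOn (fun u _ => hA' u)
    ((hx.constant_coeff_eq_zero hxr).trans (hx.constant_coeff_eq_zero hxs).symm)
  have : 0 ≤ -4 * a * (1 + T * K) := mul_nonneg (by linarith) (by positivity)
  exact sq_pos_iff.1 (this.trans_lt hdisc)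

end IsAbelSolution

theorem nonconstant_sign_solution_has_sign_general {A B C x : ℝ → ℝ} {T K a : ℝ}
    (hx : IsAbelSolution A B C x) (hA : Differentiable ℝ A) (hA' : ∀ t, a ≤ deriv A t)
    (hB : Continuous B) (hC : ∀ t, |C t| ≤ K) (hdisc : ∀ t, -4 * a * (1 + T * K) < B t ^ 2)
    (hzero : ∀ t, ∃ s ∈ Icc t (t + T), x s = 0) :
    (∀ t, 0 < A t * B t → x t < 0) ∧ (∀ t, A t * B t < 0 → 0 < x t) ∧
      ∀ t, x t = 0 ↔ A t = 0 := by
  have hB_ne (t : ℝ) : B t ≠ 0 := hx.linear_coeff_ne_zero hA hA' (hC t) (hdisc t) hzero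
  have nonpos {t : ℝ} (ht : 0 ≤ A t * B t) : x t ≤ 0 :=
    hx.nonpos_of_mul_coeff_nonneg hA hA' hB hB_ne hC hdisc hzero ht
  have nonneg {t : ℝ} (ht : A t * B t ≤ 0) : 0 ≤ x t :=
    neg_nonpos.1 <| hx.neg.nonpos_of_mul_coeff_nonneg hA hA' hB.neg
      (fun s => neg_ne_zero.2 (hB_ne s)) hC (fun s => (hdisc s).trans_eq (neg_sq _).symm)
      (by simpa only [neg_eq_zero] using hzero) (by simpa using ht)
  have mul_eq_zero_of_eq_zero {t : ℝ} (ht : x t = 0) : A t * B t = 0 :=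
    mul_eq_zero_of_left (hx.constant_coeff_eq_zero ht) _
  exact ⟨fun t ht => (nonpos ht.le).lt_of_ne (mt mul_eq_zero_of_eq_zero ht.ne'),
    fun t ht => (nonneg ht.le).lt_of_ne' (mt mul_eq_zero_of_eq_zero ht.ne),
    fun t => ⟨hx.constant_coeff_eq_zero, fun ht =>
      le_antisymm (nonpos (by simp [ht])) (nonneg (by simp [ht]))⟩⟩

/-- under (H), every T-periodic solution of (N) with nonconstant sign
has the sign of −A·B. -/
theorem nonconstant_sign_solution_has_sign
    (T : ℝ) (hT : 0 < T) (A B C : ℝ → ℝ)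
    (hA : ContDiff ℝ 1 A) (hB : ContDiff ℝ 1 B) (hC : ContDiff ℝ 1 C)
    (hAper : Function.Periodic A T) (hBper : Function.Periodic B T)
    (hCper : Function.Periodic C T)
    (hzero : ∃ t ∈ Icc (0 : ℝ) T, A t = 0)
    (hcond : (sInf ((fun t => |B t|) '' Icc (0 : ℝ) T)) ^ 2 >
      -4 * sInf ((fun t => deriv A t) '' Icc (0 : ℝ) T) *
        (1 + T * sSup ((fun t => |C t|) '' Icc (0 : ℝ) T)))
    (x : ℝ → ℝ) (hxdiff : Differentiable ℝ x)
    (hxsol : ∀ t : ℝ, x t * deriv x t = A t + B t * x t + C t * x t ^ 2)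
    (hxper : Function.Periodic x T)
    (hx0 : ∃ t₀ : ℝ, x t₀ = 0) (hxne : ∃ t : ℝ, x t ≠ 0) :
    (∀ t : ℝ, 0 < A t * B t → x t < 0) ∧
    (∀ t : ℝ, A t * B t < 0 → 0 < x t) ∧
    (∀ t : ℝ, x t = 0 ↔ A t = 0) :=
  nonconstant_sign_solution_has_sign_general ⟨hxdiff, hxsol⟩ (hA.differentiable one_ne_zero)
    (csInf_image_Icc_le_of_periodic (hA.continuous_deriv le_rfl) (periodic_deriv hAper) hT)
    hB.continuous (le_csSup_image_Icc_of_periodic hC.continuous.abs (hCper.comp abs) hT)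
    (fun t => hcond.trans_le (sq_csInf_image_abs_Icc_le_of_periodic hB.continuous hBper hT t))
    (fun t => (hxper.image_Icc hT t).ge hx0)
end

section
/- Assume (H) and that B(t) > 0 for all t. Let a < b be real numbers with A(t) ≥ 0 for all t ∈ [a, b]. Then there exists ε > 0 such that for every x_a ∈ (0, ε), every solution x of (N) on an interval [a, t₃) with t₃ ≤ b and x(a) = x_a satisfies x(t) > x_a for all t ∈ (a, t₃); in particular x remains strictly positive on [a, t₃). -/
open Set Filter Topology

/-!
A level `c > 0` with `A + B c + C c² > 0` can be crossed by a solution only with positive slope,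
because `c x' = A + B c + C c²` wherever `x = c`; so a solution that starts at or above such a level
never returns to it. When `A ≥ 0` and `B > 0` on a compact interval, every sufficiently small
`c > 0` is such a level, since `A + B c + C c² ≥ c (B + C c)` and `B + C c` is close to `B`.
-/

section Comparison

variable {f g f' g' : ℝ → ℝ} {a b : ℝ}

theorem le_on_Ico_of_deriv_lt_at_contact
    (hf : ∀ t ∈ Ico a b, HasDerivWithinAt f (f' t) (Ico a b) t)
    (hg : ∀ t ∈ Ico a b, HasDerivWithinAt g (g' t) (Ico a b) t)
    (ha : f a ≤ g a) (hcontact : ∀ t ∈ Ico a b, f t = g t → f' t < g' t) :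
    ∀ t ∈ Ico a b, f t ≤ g t := by
  intro t ht
  have hsub : Icc a t ⊆ Ico a b := Icc_subset_Ico_right ht.2
  have hnhds : ∀ u ∈ Ico a t, Ico a b ∈ 𝓝[≥] u := fun u hu ↦
    mem_of_superset (Ico_mem_nhdsGE (hu.2.trans ht.2)) (Ico_subset_Ico_left hu.1)
  have hmem : ∀ u ∈ Ico a t, u ∈ Ico a b := fun u hu ↦ hsub (Ico_subset_Icc_self hu)
  exact image_le_of_deriv_right_lt_deriv_boundary'
    (fun u hu ↦ (hf u (hsub hu)).continuousWithinAt.mono hsub)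
    (fun u hu ↦ (hf u (hmem u hu)).mono_of_mem_nhdsWithin (hnhds u hu)) ha
    (fun u hu ↦ (hg u (hsub hu)).continuousWithinAt.mono hsub)
    (fun u hu ↦ (hg u (hmem u hu)).mono_of_mem_nhdsWithin (hnhds u hu))
    (fun u hu ↦ hcontact u (hmem u hu)) (right_mem_Icc.2 ht.1)

theorem lt_on_Ioo_of_deriv_lt_at_contact
    (hf : ∀ t ∈ Ico a b, HasDerivWithinAt f (f' t) (Ico a b) t)
    (hg : ∀ t ∈ Ico a b, HasDerivWithinAt g (g' t) (Ico a b) t)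
    (ha : f a ≤ g a) (hcontact : ∀ t ∈ Ico a b, f t = g t → f' t < g' t) :
    ∀ t ∈ Ioo a b, f t < g t := by
  intro t ht
  have hle := le_on_Ico_of_deriv_lt_at_contact hf hg ha hcontact
  have ht' : t ∈ Ico a b := Ioo_subset_Ico_self ht
  have hnhds : Ico a b ∈ 𝓝 t := Ico_mem_nhds ht.1 ht.2
  refine (hle t ht').lt_of_ne fun heq ↦ (hcontact t ht' heq).ne' (sub_eq_zero.1 ?_)
  have hmin : IsLocalMin (g - f) t := by
    filter_upwards [hnhds] with u hu
    simpa [heq] using hle u hu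
  exact hmin.hasDerivAt_eq_zero (((hg t ht').hasDerivAt hnhds).sub ((hf t ht').hasDerivAt hnhds))

end Comparison

/-- `x` solves the Abel equation of the second kind `x x' = A + B x + C x²` on `s`. The derivative
`x'` is taken within `s`, so it is one-sided at an endpoint belonging to `s`. -/
def IsAbelSolutionOn (A B C x x' : ℝ → ℝ) (s : Set ℝ) : Prop :=
  ∀ t ∈ s, HasDerivWithinAt x (x' t) s t ∧ x t * x' t = A t + B t * x t + C t * x t ^ 2

theorem IsAbelSolutionOn.const_lt_of_rhs_pos {A B C x x' : ℝ → ℝ} {a b c : ℝ}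
    (hx : IsAbelSolutionOn A B C x x' (Ico a b)) (hc : 0 < c) (ha : c ≤ x a)
    (hlevel : ∀ t ∈ Ico a b, 0 < A t + B t * c + C t * c ^ 2) :
    ∀ t ∈ Ioo a b, c < x t := by
  refine lt_on_Ioo_of_deriv_lt_at_contact (fun t _ ↦ hasDerivWithinAt_const t (Ico a b) c)
    (fun t ht ↦ (hx t ht).1) ha fun t ht heq ↦ ?_
  have hslope : c * x' t = A t + B t * c + C t * c ^ 2 := heq ▸ (hx t ht).2
  exact pos_of_mul_pos_right (hslope ▸ hlevel t ht) hc.le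

theorem exists_pos_forall_add_mul_pos_of_isCompact {X : Type*} [TopologicalSpace X] {K : Set X}
    {f g : X → ℝ} (hK : IsCompact K) (hf : ContinuousOn f K) (hg : ContinuousOn g K)
    (hpos : ∀ t ∈ K, 0 < f t) :
    ∃ ε > 0, ∀ c ∈ Ioo 0 ε, ∀ t ∈ K, 0 < f t + g t * c := by
  have hden : ∀ t, 0 < |g t| + 1 := fun t ↦ by positivity
  obtain ⟨ε, hε, hle⟩ := hK.exists_forall_le' (hf.div (hg.abs.add continuousOn_const)
    fun t _ ↦ (hden t).ne') fun t ht ↦ div_pos (hpos t ht) (hden t)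
  refine ⟨ε, hε, fun c hc t ht ↦ ?_⟩
  have hlt : c * (|g t| + 1) < f t := (lt_div_iff₀ (hden t)).1 (hc.2.trans_le (hle t ht))
  have hge : -|g t| * c ≤ g t * c := mul_le_mul_of_nonneg_right (neg_abs_le _) hc.1.le
  linarith [hc.1]

theorem small_positive_solutions_stay_positive_general {A B C : ℝ → ℝ} {a b : ℝ}
    (hB : ContinuousOn B (Icc a b)) (hC : ContinuousOn C (Icc a b))
    (hA : ∀ t ∈ Icc a b, 0 ≤ A t) (hBpos : ∀ t ∈ Icc a b, 0 < B t) :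
    ∃ ε > 0, ∀ xa ∈ Ioo 0 ε, ∀ t₃ ≤ b, ∀ x x' : ℝ → ℝ,
      IsAbelSolutionOn A B C x x' (Ico a t₃) → x a = xa →
      (∀ t ∈ Ioo a t₃, xa < x t) ∧ (∀ t ∈ Ico a t₃, 0 < x t) := by
  obtain ⟨ε, hε, hsmall⟩ := exists_pos_forall_add_mul_pos_of_isCompact isCompact_Icc hB hC hBpos
  refine ⟨ε, hε, fun xa hxa t₃ ht₃ x x' hx hinit ↦ ?_⟩
  have hlevel : ∀ t ∈ Ico a t₃, 0 < A t + B t * xa + C t * xa ^ 2 := by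
    intro t ht
    have htb : t ∈ Icc a b := ⟨ht.1, ht.2.le.trans ht₃⟩
    calc 0 < A t + xa * (B t + C t * xa) :=
          add_pos_of_nonneg_of_pos (hA t htb) (mul_pos hxa.1 (hsmall xa hxa t htb))
      _ = A t + B t * xa + C t * xa ^ 2 := by ring
  have habove : ∀ t ∈ Ioo a t₃, xa < x t := hx.const_lt_of_rhs_pos hxa.1 hinit.ge hlevel
  refine ⟨habove, fun t ht ↦ ?_⟩
  obtain rfl | hat := ht.1.eq_or_lt
  · exact hinit ▸ hxa.1
  · exact hxa.1.trans (habove t ⟨hat, ht.2⟩)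

/-- under (H) with B > 0, if A ≥ 0 on [a,b], then small positive initial data
at t = a yield solutions of (N) that stay above their initial value, hence strictly positive. -/
theorem small_positive_solutions_stay_positive
    (T : ℝ) (hT : 0 < T) (A B C : ℝ → ℝ)
    (hA : ContDiff ℝ 1 A) (hB : ContDiff ℝ 1 B) (hC : ContDiff ℝ 1 C)
    (hAper : Function.Periodic A T) (hBper : Function.Periodic B T)
    (hCper : Function.Periodic C T)
    (hzero : ∃ t ∈ Icc (0 : ℝ) T, A t = 0)
    (hcond : (sInf ((fun t => |B t|) '' Icc (0 : ℝ) T)) ^ 2 >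
      -4 * sInf ((fun t => deriv A t) '' Icc (0 : ℝ) T) *
        (1 + T * sSup ((fun t => |C t|) '' Icc (0 : ℝ) T)))
    (hBpos : ∀ t : ℝ, 0 < B t)
    (a b : ℝ) (hab : a < b) (hAnn : ∀ t ∈ Icc a b, 0 ≤ A t) :
    ∃ ε > (0 : ℝ), ∀ xa ∈ Ioo (0 : ℝ) ε, ∀ t₃ : ℝ, a < t₃ → t₃ ≤ b →
      ∀ x x' : ℝ → ℝ,
        (∀ t ∈ Ico a t₃, HasDerivWithinAt x (x' t) (Ico a t₃) t ∧
          x t * x' t = A t + B t * x t + C t * x t ^ 2) →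
        x a = xa →
        (∀ t ∈ Ioo a t₃, xa < x t) ∧ (∀ t ∈ Ico a t₃, 0 < x t) := by
  obtain ⟨ε, hε, h⟩ := small_positive_solutions_stay_positive_general
    hB.continuous.continuousOn hC.continuous.continuousOn hAnn fun t _ ↦ hBpos t
  exact ⟨ε, hε, fun xa hxa t₃ _ ↦ h xa hxa t₃⟩
end

section
/- Let A, B, C: ℝ → ℝ be continuous, let a ∈ ℝ, and assume A(a) = 0, A is differentiable at a with A′(a) < 0, and B(a) > 0. Then for no ε > 0 does there exist a solution x of (N) on [a, a + ε) with x(a) = 0 and x(t) < 0 for all t ∈ (a, a + ε). -/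
/-!
Divided by `x`, the equation reads `x' = A / x + (B + C x)`. Just to the right of `a` both summands
are nonnegative as long as `x < 0`: the first because `A ≤ 0`, the second because `B` is bounded
below by a positive constant, while an upper bound `M` of `C` gives `C x ≥ M x → 0`. A negative
solution would thus be nondecreasing to the right of `a`, hence at least its limit `0` at `a`.
-/

open Set Filter Topology

theorem eventually_nhdsGT_neg_of_deriv_neg {f : ℝ → ℝ} {a : ℝ} (hf' : deriv f a < 0)
    (hfa : f a = 0) : ∀ᶠ t in 𝓝[>] a, f t < 0 := by
  filter_upwards [nhdsWithin_le_nhds (eventually_nhdsWithin_sign_eq_of_deriv_neg hf' hfa),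
    self_mem_nhdsWithin] with t hsign (hat : a < t)
  rwa [sign_neg (sub_neg.2 hat), sign_eq_neg_one_iff] at hsign

theorem eventually_nhdsGT_le_of_tendsto_of_deriv_nonneg {f f' : ℝ → ℝ} {a l : ℝ}
    (hl : Tendsto f (𝓝[>] a) (𝓝 l)) (hf : ∀ᶠ t in 𝓝[>] a, HasDerivAt f (f' t) t)
    (hf' : ∀ᶠ t in 𝓝[>] a, 0 ≤ f' t) : ∀ᶠ t in 𝓝[>] a, l ≤ f t := by
  obtain ⟨u, hau, hu⟩ := (nhdsGT_basis a).eventually_iff.1 (hf.and hf')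
  have hmono : MonotoneOn f (Ioo a u) := by
    refine monotoneOn_of_hasDerivWithinAt_nonneg (f' := f') (convex_Ioo a u)
      (fun t ht ↦ (hu ht).1.continuousAt.continuousWithinAt) ?_ ?_ <;> rw [interior_Ioo]
    exacts [fun t ht ↦ (hu ht).1.hasDerivWithinAt, fun t ht ↦ (hu ht).2]
  filter_upwards [Ioo_mem_nhdsGT hau] with t ht
  refine le_of_tendsto hl ?_
  filter_upwards [Ioo_mem_nhdsGT ht.1] with s hs
  exact hmono ⟨hs.1, hs.2.trans ht.2⟩ ht hs.2.le

theorem eventually_add_mul_nonneg_of_tendsto_zero {ι : Type*} {F : Filter ι} {B C x : ι → ℝ}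
    {b : ℝ} (hB : ∀ᶠ t in F, b ≤ B t) (hb : 0 < b) (hC : F.IsBoundedUnder (· ≤ ·) C)
    (hx : Tendsto x F (𝓝 0)) (hnonpos : ∀ᶠ t in F, x t ≤ 0) :
    ∀ᶠ t in F, 0 ≤ B t + C t * x t := by
  obtain ⟨M, hM⟩ := hC
  have hlim : Tendsto (fun t ↦ b + M * x t) F (𝓝 b) := by
    simpa using (hx.const_mul M).const_add b
  filter_upwards [hB, eventually_map.1 hM, hnonpos, hlim.eventually_const_le hb]
    with t hBt hCt hxt ht
  calc 0 ≤ b + M * x t := ht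
    _ ≤ B t + C t * x t := add_le_add hBt (mul_le_mul_of_nonpos_right hCt hxt)

theorem abel_deriv_nonneg {R : Type*} [CommRing R] [LinearOrder R] [IsStrictOrderedRing R]
    {A B C x x' : R} (hA : A ≤ 0) (hBC : 0 ≤ B + C * x) (hx : x < 0)
    (h : x * x' = A + B * x + C * x ^ 2) : 0 ≤ x' := by
  refine nonneg_of_mul_nonpos_right ?_ hx
  calc x * x' = A + x * (B + C * x) := by rw [h]; ring
    _ ≤ 0 := add_nonpos hA (mul_nonpos_of_nonpos_of_nonneg hx.le hBC)

theorem abel_not_eventually_nhdsGT_neg {A B C x x' : ℝ → ℝ} {a b : ℝ}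
    (hA : ∀ᶠ t in 𝓝[>] a, A t ≤ 0) (hB : ∀ᶠ t in 𝓝[>] a, b ≤ B t) (hb : 0 < b)
    (hC : (𝓝[>] a).IsBoundedUnder (· ≤ ·) C) (hx₀ : Tendsto x (𝓝[>] a) (𝓝 0))
    (hx : ∀ᶠ t in 𝓝[>] a, HasDerivAt x (x' t) t)
    (h : ∀ᶠ t in 𝓝[>] a, x t * x' t = A t + B t * x t + C t * x t ^ 2) :
    ¬ ∀ᶠ t in 𝓝[>] a, x t < 0 := by
  intro hneg
  have hBC := eventually_add_mul_nonneg_of_tendsto_zero hB hb hC hx₀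
    (hneg.mono fun _ ↦ le_of_lt)
  have hx' : ∀ᶠ t in 𝓝[>] a, 0 ≤ x' t := by
    filter_upwards [hA, hBC, hneg, h] with t using abel_deriv_nonneg
  have hnonneg := eventually_nhdsGT_le_of_tendsto_of_deriv_nonneg hx₀ hx hx'
  obtain ⟨t, ht, ht'⟩ := (hnonneg.and hneg).exists
  exact ht.not_gt ht'

theorem no_negative_solution_at_unstable_node_general {A B C : ℝ → ℝ} {a b : ℝ}
    (hA : ∀ᶠ t in 𝓝[>] a, A t ≤ 0) (hB : ∀ᶠ t in 𝓝[>] a, b ≤ B t) (hb : 0 < b)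
    (hC : (𝓝[>] a).IsBoundedUnder (· ≤ ·) C) :
    ∀ ε > (0 : ℝ), ¬ ∃ x x' : ℝ → ℝ,
      (∀ t ∈ Ico a (a + ε), HasDerivWithinAt x (x' t) (Ico a (a + ε)) t ∧
        x t * x' t = A t + B t * x t + C t * x t ^ 2) ∧
      x a = 0 ∧
      (∀ t ∈ Ioo a (a + ε), x t < 0) := by
  rintro ε hε ⟨x, x', hx, hxa, hneg⟩
  have haε : a < a + ε := lt_add_of_pos_right a hε
  have hIoo : ∀ᶠ t in 𝓝[>] a, t ∈ Ioo a (a + ε) := Ioo_mem_nhdsGT haε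
  have hx₀ : Tendsto x (𝓝[>] a) (𝓝 0) := by
    rw [← hxa, ← nhdsWithin_Ioo_eq_nhdsGT haε]
    exact (hx a (left_mem_Ico.2 haε)).1.continuousWithinAt.mono Ioo_subset_Ico_self
  have hderiv : ∀ᶠ t in 𝓝[>] a, HasDerivAt x (x' t) t := hIoo.mono fun t ht ↦
    (hx t (Ioo_subset_Ico_self ht)).1.hasDerivAt (Ico_mem_nhds ht.1 ht.2)
  exact abel_not_eventually_nhdsGT_neg hA hB hb hC hx₀ hderiv
    (hIoo.mono fun t ht ↦ (hx t (Ioo_subset_Ico_self ht)).2) (hIoo.mono hneg)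

/-- if A(a) = 0, A′(a) < 0 and B(a) > 0, then there is no solution of (N)
on [a, a+ε) with x(a) = 0 which is negative on (a, a+ε). -/
theorem no_negative_solution_at_unstable_node
    (A B C : ℝ → ℝ) (hA : Continuous A) (hB : Continuous B) (hC : Continuous C)
    (a : ℝ) (hAa : A a = 0)
    (hAdiff : DifferentiableAt ℝ A a) (hA' : deriv A a < 0) (hBa : 0 < B a) :
    ∀ ε > (0 : ℝ), ¬ ∃ x x' : ℝ → ℝ,
      (∀ t ∈ Ico a (a + ε), HasDerivWithinAt x (x' t) (Ico a (a + ε)) t ∧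
        x t * x' t = A t + B t * x t + C t * x t ^ 2) ∧
      x a = 0 ∧
      (∀ t ∈ Ioo a (a + ε), x t < 0) := by
  exact no_negative_solution_at_unstable_node_general
    ((eventually_nhdsGT_neg_of_deriv_neg hA' hAa).mono fun _ ↦ le_of_lt)
    (hB.continuousWithinAt.tendsto.eventually_const_le (half_lt_self hBa)) (half_pos hBa)
    hC.continuousWithinAt.tendsto.isBoundedUnder_le
end

section
/- Assume (H) with B(t) > 0 for all t and min_{t∈[0,T]} A′(t) < 0, and set α := √(−(min_{t∈[0,T]} A′(t)) / (1 + T·max_{t∈[0,T]} |C(t)|)) > 0. Let a < b with b − a ≤ T, A(a) = A(b) = 0 and A(t) > 0 for all t ∈ (a, b). Then for every t ∈ (a, b), A(t)/(α·(t − b)) + B(t) + C(t)·α·(t − b) > α. -/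
/-!
Put `m = -min A'`, `K = 1 + T * max |C|` and `β = min |B|`. Suppose `α > 0`, `A b = 0` and
`b - T ≤ t < b`. Along `x = α (t - b)` the mean value theorem gives `A t / x ≥ -m / α`, and
`|x| ≤ α T` gives `C t * x ≥ -α (K - 1)`, so the slope exceeds `α` as soon as `m / α + α K < β`.
The left-hand side is minimal at `α = √(m / K)`, where it equals `2 √(m K)`; so this choice of `α`
works precisely because `4 m K < β²`.
-/

open Set Filter Topology

section Periodic

open Function

variable {G β : Type*} [AddCommGroup G] [LinearOrder G] [IsOrderedAddMonoid G] [Archimedean G]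
  [ConditionallyCompleteLattice β] {f : G → β} {T : G}

lemma csInf_image_Icc_le_of_periodic_s14 (hf : Periodic f T) (hT : 0 < T) (hbdd : BddBelow (range f))
    (x : G) : sInf (f '' Icc 0 T) ≤ f x := by
  have himage : f '' Icc 0 T = range f := by simpa only [zero_add] using hf.image_Icc hT 0
  rw [himage]
  exact csInf_le hbdd (mem_range_self x)

lemma le_csSup_image_Icc_of_periodic_s14 (hf : Periodic f T) (hT : 0 < T) (hbdd : BddAbove (range f))
    (x : G) : f x ≤ sSup (f '' Icc 0 T) :=
  csInf_image_Icc_le_of_periodic_s14 (β := βᵒᵈ) hf hT hbdd x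

lemma deriv_periodic {𝕜 F : Type*} [NontriviallyNormedField 𝕜] [NormedAddCommGroup F]
    [NormedSpace 𝕜 F] {f : 𝕜 → F} {T : 𝕜} (hf : Periodic f T) : Periodic (deriv f) T := fun x => by
  rw [← deriv_comp_add_const, hf.funext]

end Periodic

lemma div_sqrt_div_add_sqrt_div_mul {m : ℝ} (hm : 0 ≤ m) (K : ℝ) :
    m / √(m / K) + √(m / K) * K = 2 * √(m * K) := by
  calc m / √(m / K) + √(m / K) * K = m / √m * √K + √m * (K / √K) := by
        rw [Real.sqrt_div hm, div_div_eq_mul_div]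
        ring
    _ = 2 * √(m * K) := by
        rw [Real.div_sqrt, Real.div_sqrt, Real.sqrt_mul hm]
        ring

lemma le_div_sub_of_le_deriv {f : ℝ → ℝ} {μ b t : ℝ} (hf : Differentiable ℝ f)
    (hμ : ∀ x, μ ≤ deriv f x) (hb : f b = 0) (htb : t < b) : μ ≤ f t / (t - b) := by
  rw [le_div_iff_of_neg (sub_neg.2 htb)]
  linarith [mul_sub_le_image_sub_of_le_deriv hf hμ htb.le]

/-- The right-hand side `S(t, x) = A(t) / x + B(t) + C(t) x` of the equation `x' = S(t, x)`, which
is equivalent to the Abel equation `x x' = A(t) + B(t) x + C(t) x²` away from `x = 0`. At `x = 0`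
the quotient takes the junk value `0`. -/
noncomputable def abelSlope (A B C : ℝ → ℝ) (t x : ℝ) : ℝ :=
  A t / x + B t + C t * x

section AbelSlope

variable {A B C : ℝ → ℝ} {T m β c α b t : ℝ}

lemma sub_le_abelSlope_line (hA : Differentiable ℝ A) (hA' : ∀ x, -m ≤ deriv A x) (hAb : A b = 0)
    (hβ : β ≤ B t) (hc : |C t| ≤ c) (hα : 0 < α) (ht : t ∈ Ico (b - T) b) :
    β - (m / α + α * (T * c)) ≤ abelSlope A B C t (α * (t - b)) := by
  have hAt : -(m / α) ≤ A t / (α * (t - b)) := by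
    calc -(m / α) = -m / α := (neg_div α m).symm
      _ ≤ A t / (t - b) / α := by gcongr; exact le_div_sub_of_le_deriv hA hA' hAb ht.2
      _ = A t / (α * (t - b)) := by rw [div_div, mul_comm]
  have htT : |t - b| ≤ T := abs_le.2 ⟨by linarith [ht.1], by linarith [ht.1, ht.2]⟩
  have hCt : -(α * (T * c)) ≤ C t * (α * (t - b)) := by
    refine neg_le_of_abs_le ?_
    calc |C t * (α * (t - b))| = α * (|t - b| * |C t|) := by
          rw [abs_mul, abs_mul, abs_of_pos hα]
          ring
      _ ≤ α * (T * c) := by gcongr; exact (abs_nonneg _).trans htT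
  unfold abelSlope
  linarith

lemma lt_abelSlope_line_of_sq_lt (hA : Differentiable ℝ A) (hA' : ∀ x, -m ≤ deriv A x)
    (hAb : A b = 0) (hβ : β ≤ B t) (hc : |C t| ≤ c) (hm : 0 < m) (hβ₀ : 0 ≤ β)
    (hdisc : 4 * m * (1 + T * c) < β ^ 2) (ht : t ∈ Ico (b - T) b) :
    √(m / (1 + T * c)) < abelSlope A B C t (√(m / (1 + T * c)) * (t - b)) := by
  have hK : 0 < 1 + T * c := by
    have hT : 0 ≤ T := by linarith [ht.1, ht.2]
    have hc₀ : 0 ≤ c := (abs_nonneg _).trans hc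
    positivity
  have hα : 0 < √(m / (1 + T * c)) := Real.sqrt_pos.2 (div_pos hm hK)
  have hsqrt : 2 * √(m * (1 + T * c)) < β := by
    refine lt_of_pow_lt_pow_left₀ 2 hβ₀ ?_
    calc (2 * √(m * (1 + T * c))) ^ 2 = 4 * m * (1 + T * c) := by
          rw [mul_pow, Real.sq_sqrt (by positivity)]
          ring
      _ < β ^ 2 := hdisc
  have hbalance : m / √(m / (1 + T * c)) + √(m / (1 + T * c)) * (1 + T * c) < β :=
    (div_sqrt_div_add_sqrt_div_mul hm.le _).trans_lt hsqrt
  linarith [sub_le_abelSlope_line hA hA' hAb hβ hc hα ht]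

end AbelSlope

theorem slope_field_exceeds_alpha_on_line_general
    {T : ℝ} (hT : 0 < T) {A B C : ℝ → ℝ} (hA : ContDiff ℝ 1 A) (hC : Continuous C)
    (hAper : Function.Periodic A T) (hBper : Function.Periodic B T)
    (hCper : Function.Periodic C T)
    (hcond : (sInf ((fun t => |B t|) '' Icc (0 : ℝ) T)) ^ 2 >
      -4 * sInf ((fun t => deriv A t) '' Icc (0 : ℝ) T) *
        (1 + T * sSup ((fun t => |C t|) '' Icc (0 : ℝ) T)))
    (hBpos : ∀ t : ℝ, 0 < B t)
    (hmin : sInf ((fun t => deriv A t) '' Icc (0 : ℝ) T) < 0)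
    {α : ℝ}
    (hα : α = Real.sqrt (-(sInf ((fun t => deriv A t) '' Icc (0 : ℝ) T)) /
      (1 + T * sSup ((fun t => |C t|) '' Icc (0 : ℝ) T))))
    {b : ℝ} (hAb : A b = 0) :
    0 < α ∧ ∀ t ∈ Ico (b - T) b, α < abelSlope A B C t (α * (t - b)) := by
  have hA'per : Function.Periodic (deriv A) T := deriv_periodic hAper
  have hA' (x : ℝ) : sInf ((fun t => deriv A t) '' Icc 0 T) ≤ deriv A x :=
    csInf_image_Icc_le_of_periodic_s14 hA'per hT
      (hA'per.compact_of_continuous hT.ne' (hA.continuous_deriv le_rfl)).bddBelow x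
  have hB (x : ℝ) : sInf ((fun t => |B t|) '' Icc 0 T) ≤ B x :=
    (csInf_image_Icc_le_of_periodic_s14 (hBper.comp abs) hT
      ⟨0, forall_mem_range.2 fun _ => abs_nonneg _⟩ x).trans_eq (abs_of_pos (hBpos x))
  have hC' (x : ℝ) : |C x| ≤ sSup ((fun t => |C t|) '' Icc 0 T) :=
    le_csSup_image_Icc_of_periodic_s14 (hCper.comp abs) hT
      ((hCper.comp abs).compact_of_continuous hT.ne' hC.abs).bddAbove x
  have hβ₀ : 0 ≤ sInf ((fun t => |B t|) '' Icc 0 T) :=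
    Real.sInf_nonneg (forall_mem_image.2 fun _ _ => abs_nonneg _)
  have hK : 0 < 1 + T * sSup ((fun t => |C t|) '' Icc 0 T) := by
    have hc₀ : 0 ≤ sSup ((fun t => |C t|) '' Icc 0 T) := (abs_nonneg _).trans (hC' 0)
    positivity
  subst hα
  exact ⟨Real.sqrt_pos.2 (div_pos (neg_pos.2 hmin) hK), fun t ht =>
    lt_abelSlope_line_of_sq_lt (hA.differentiable one_ne_zero) (by simpa only [neg_neg] using hA')
      hAb (hB t) (hC' t) (neg_pos.2 hmin) hβ₀ (by linarith) ht⟩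

/-- under (H) with B > 0 and min A′ < 0, set
α = √(−(min A′)/(1 + T·max|C|)). Then along the line x = α(t−b), the slope field of (N)
exceeds α on (a,b), where a < b are consecutive zeros of A with A > 0 in between. -/
theorem slope_field_exceeds_alpha_on_line
    (T : ℝ) (hT : 0 < T) (A B C : ℝ → ℝ)
    (hA : ContDiff ℝ 1 A) (hB : ContDiff ℝ 1 B) (hC : ContDiff ℝ 1 C)
    (hAper : Function.Periodic A T) (hBper : Function.Periodic B T)
    (hCper : Function.Periodic C T)
    (hzero : ∃ t ∈ Icc (0 : ℝ) T, A t = 0)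
    (hcond : (sInf ((fun t => |B t|) '' Icc (0 : ℝ) T)) ^ 2 >
      -4 * sInf ((fun t => deriv A t) '' Icc (0 : ℝ) T) *
        (1 + T * sSup ((fun t => |C t|) '' Icc (0 : ℝ) T)))
    (hBpos : ∀ t : ℝ, 0 < B t)
    (hmin : sInf ((fun t => deriv A t) '' Icc (0 : ℝ) T) < 0)
    (α : ℝ)
    (hα : α = Real.sqrt (-(sInf ((fun t => deriv A t) '' Icc (0 : ℝ) T)) /
      (1 + T * sSup ((fun t => |C t|) '' Icc (0 : ℝ) T))))
    (a b : ℝ) (hab : a < b) (hba : b - a ≤ T)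
    (hAa : A a = 0) (hAb : A b = 0) (hApos : ∀ t ∈ Ioo a b, 0 < A t) :
    0 < α ∧
      ∀ t ∈ Ioo a b, α < A t / (α * (t - b)) + B t + C t * (α * (t - b)) := by
  have hmain := slope_field_exceeds_alpha_on_line_general hT hA hC.continuous hAper hBper hCper
    hcond hBpos hmin hα hAb
  exact ⟨hmain.1, fun t ht => hmain.2 t ⟨by linarith [ht.1], ht.2⟩⟩
end

section
/- Let T > 0 and let A: ℝ → ℝ be C¹ and T-periodic, with at least one zero in [0,T], and assume min_{t∈[0,T]} A′(t) > −1/4. Then the normal form equation (NF) admits a C¹, T-periodic solution x*: ℝ → ℝ which has the sign of −A, i.e., for every t ∈ ℝ: x*(t) < 0 whenever A(t) > 0, x*(t) > 0 whenever A(t) < 0, and x*(t) = 0 if and only if A(t) = 0. -/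
open Set Filter Topology

/-!
Look for `x = -c A` with `c > 0`; such an `x` automatically has the sign of `-A`. Where `A ≠ 0`,
the equation for `x` becomes `A c' = 1 / c - 1 - A' c`, and it says `x' = 1 - 1 / c`. Along the flow
`φ` of `t' = A t` the equation for `c` reads `d/ds c (φ s t) = 1 / c - 1 - A' c`, which makes sense
at the zeros of `A` too: they are rest points, and there it reads `1 / c - 1 - A' c = 0`.

If `|A'| ≤ K` and `A' ≥ a > -1/4`, the right-hand side is nonnegative at `c = 1 / (1 + K)` and
nonpositive at `c = 2`, and in between its derivative in `c` is `-1 / c² - A' ≤ -(a + 1/4) < 0`.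
So there is exactly one function `c` with values in `[1 / (1 + K), 2]` that solves the equation
along every complete orbit: it is the fixed point of the Duhamel operator, hence continuous, and
by uniqueness it inherits the periods of `A`.

Away from the zeros of `A`, orbits are local parametrizations of the line, so `c` is
differentiable and `x' = 1 - 1 / c`. At a zero, continuity of `c` gives `x' = -c A'`, which is again
`1 - 1 / c` by the rest point equation. Thus `x'` is continuous, and
`x x' = -c A (1 - 1 / c) = A + x`.
-/

open MeasureTheory ProbabilityTheory
open scoped Manifold NNReal BoundedContinuousFunction

section LipschitzFlow

variable {E : Type*} [NormedAddCommGroup E] [NormedSpace ℝ E] {v : E → E} {K : ℝ≥0}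

-- The ball of radius `‖v x‖ + 1` makes the existence time `1 / (1 + K)` independent of `x`.
lemma exists_isIntegralCurveOn_Ioo_of_lipschitzWith [CompleteSpace E] (hv : LipschitzWith K v)
    (x : E) :
    ∃ γ : ℝ → E, γ 0 = x ∧
      IsIntegralCurveOn γ (fun _ => v) (Ioo (-(1 + K : ℝ)⁻¹) (1 + K : ℝ)⁻¹) := by
  have hε : 0 < (1 + K : ℝ)⁻¹ := by positivity
  have hbound : ∀ y ∈ Metric.closedBall x (‖v x‖₊ + 1 : ℝ≥0),
      ‖v y‖ ≤ ((1 + K) * (‖v x‖₊ + 1) : ℝ≥0) := by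
    intro y hy
    have hyx : dist (v y) (v x) ≤ K * (‖v x‖ + 1) :=
      (hv.dist_le_mul y x).trans (mul_le_mul_of_nonneg_left hy K.2)
    calc ‖v y‖ ≤ ‖v x‖ + ‖v y - v x‖ := norm_le_norm_add_norm_sub' _ _
      _ ≤ (1 + K) * (‖v x‖ + 1) := by rw [← dist_eq_norm]; linarith
  obtain ⟨γ, hγ0, hγ⟩ := (IsPicardLindelof.of_time_independent (r := 0)
    (t₀ := (⟨0, neg_nonpos.2 hε.le, hε.le⟩ : Icc (-(1 + K : ℝ)⁻¹) (1 + K : ℝ)⁻¹))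
    hbound hv.lipschitzOnWith
    (by simp [field])).exists_eq_forall_mem_Icc_hasDerivWithinAt₀
  exact ⟨γ, hγ0, fun t ht => (hγ t (Ioo_subset_Icc_self ht)).mono Ioo_subset_Icc_self⟩

lemma exists_isIntegralCurve_of_lipschitzWith [CompleteSpace E] (hv : ContDiff ℝ 1 v)
    (hLip : LipschitzWith K v) (x : E) :
    ∃ γ : ℝ → E, γ 0 = x ∧ IsIntegralCurve γ (fun _ => v) := by
  obtain ⟨γ, hγ0, hγ⟩ := exists_isMIntegralCurve_of_isMIntegralCurveOn (I := 𝓘(ℝ, E)) (M := E)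
    (v := v) (contMDiff_vectorSpace_iff_contDiff.2 hv) (ε := (1 + K : ℝ)⁻¹) (by positivity)
    (fun y => by
      obtain ⟨γ, hγ0, hγ⟩ := exists_isIntegralCurveOn_Ioo_of_lipschitzWith hLip y
      exact ⟨γ, hγ0, fun t ht =>
        hasMFDerivWithinAt_iff_hasFDerivWithinAt.2 (hγ t ht).hasFDerivWithinAt⟩) x
  exact ⟨γ, hγ0, fun t => (hasMFDerivAt_iff_hasFDerivAt.1 (hγ t))⟩

lemma dist_le_of_isIntegralCurve_of_nonneg (hv : LipschitzWith K v) {f g : ℝ → E}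
    (hf : IsIntegralCurve f (fun _ => v)) (hg : IsIntegralCurve g (fun _ => v)) {s : ℝ}
    (hs : 0 ≤ s) : dist (f s) (g s) ≤ dist (f 0) (g 0) * Real.exp (K * s) := by
  simpa using dist_le_of_trajectories_ODE (v := fun _ => v) (fun _ => hv)
    hf.continuous.continuousOn (fun τ _ => (hf τ).hasDerivWithinAt)
    hg.continuous.continuousOn (fun τ _ => (hg τ).hasDerivWithinAt) le_rfl s (right_mem_Icc.2 hs)

lemma isIntegralCurve_comp_neg {f : ℝ → E} (hf : IsIntegralCurve f (fun _ => v)) :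
    IsIntegralCurve (fun s => f (-s)) (fun _ => -v) := fun s => by
  simpa [Function.comp_def] using (hf (-s)).scomp s (hasDerivAt_neg s)

lemma dist_le_of_isIntegralCurve (hv : LipschitzWith K v) {f g : ℝ → E}
    (hf : IsIntegralCurve f (fun _ => v)) (hg : IsIntegralCurve g (fun _ => v)) (s : ℝ) :
    dist (f s) (g s) ≤ dist (f 0) (g 0) * Real.exp (K * |s|) := by
  rcases le_total 0 s with hs | hs
  · rw [abs_of_nonneg hs]
    exact dist_le_of_isIntegralCurve_of_nonneg hv hf hg hs
  · rw [abs_of_nonpos hs]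
    simpa using dist_le_of_isIntegralCurve_of_nonneg (v := -v) hv.neg
      (isIntegralCurve_comp_neg hf) (isIntegralCurve_comp_neg hg) (neg_nonneg.2 hs)

lemma isIntegralCurve_unique (hv : LipschitzWith K v) {f g : ℝ → E}
    (hf : IsIntegralCurve f (fun _ => v)) (hg : IsIntegralCurve g (fun _ => v))
    (h0 : f 0 = g 0) : f = g :=
  funext fun s => dist_le_zero.1 <| by simpa [h0] using dist_le_of_isIntegralCurve hv hf hg s

lemma continuous_uncurry_of_isIntegralCurve (hv : LipschitzWith K v) {γ : E → ℝ → E}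
    (hγ0 : ∀ x, γ x 0 = x) (hγ : ∀ x, IsIntegralCurve (γ x) (fun _ => v)) :
    Continuous (Function.uncurry fun s x => γ x s) := by
  have hlip : ∀ R : ℝ, ∀ s ∈ Ioo (-R) R,
      LipschitzOnWith (Real.exp (K * R)).toNNReal (fun x => γ x s) univ := by
    intro R s hs
    refine lipschitzOnWith_univ.2 <| LipschitzWith.of_dist_le_mul fun x y => ?_
    calc dist (γ x s) (γ y s) ≤ dist x y * Real.exp (K * |s|) := by
          simpa only [hγ0] using dist_le_of_isIntegralCurve hv (hγ x) (hγ y) s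
      _ ≤ dist x y * Real.exp (K * R) := by gcongr; exact (abs_lt.2 hs).le
      _ = _ := by rw [Real.coe_toNNReal _ (Real.exp_pos _).le, mul_comm]
  refine continuous_iff_continuousAt.2 fun p => ?_
  have hp : p ∈ Ioo (-(|p.1| + 1)) (|p.1| + 1) ×ˢ (univ : Set E) :=
    ⟨abs_lt.1 (lt_add_one _), mem_univ _⟩
  exact (continuousOn_prod_of_continuousOn_lipschitzOnWith' _ _ (hlip (|p.1| + 1))
    fun x _ => (hγ x).continuous.continuousOn).continuousAt
      ((isOpen_Ioo.prod isOpen_univ).mem_nhds hp)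

/-- `φ` is the flow of the autonomous vector field `v`: its orbits are integral curves of `v`. -/
def IsFlowOf (φ : Flow ℝ E) (v : E → E) : Prop :=
  ∀ x, IsIntegralCurve (fun s => φ s x) (fun _ => v)

lemma exists_isFlowOf [CompleteSpace E] (hv : ContDiff ℝ 1 v) (hLip : LipschitzWith K v) :
    ∃ φ : Flow ℝ E, IsFlowOf φ v := by
  choose γ hγ0 hγ using exists_isIntegralCurve_of_lipschitzWith hv hLip
  have hadd : ∀ s τ x, γ x (s + τ) = γ (γ x τ) s := fun s τ x =>
    congrFun (isIntegralCurve_unique hLip ((hγ x).comp_add τ) (hγ (γ x τ)) (by simp [hγ0])) s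
  exact ⟨⟨fun s x => γ x s, continuous_uncurry_of_isIntegralCurve hLip hγ0 hγ, hadd, hγ0⟩, hγ⟩

namespace IsFlowOf

variable {φ : Flow ℝ E}

lemma eq_of_isIntegralCurve (hφ : IsFlowOf φ v) (hv : LipschitzWith K v) {γ : ℝ → E}
    (hγ : IsIntegralCurve γ (fun _ => v)) (s : ℝ) : φ s (γ 0) = γ s :=
  congrFun (isIntegralCurve_unique hv (hφ (γ 0)) hγ (φ.map_zero_apply _)) s

lemma apply_eq_self (hφ : IsFlowOf φ v) (hv : LipschitzWith K v) {x : E} (hx : v x = 0) (s : ℝ) :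
    φ s x = x :=
  hφ.eq_of_isIntegralCurve hv (isIntegralCurve_const fun _ => hx) s

lemma semiconj_add_const (hφ : IsFlowOf φ v) (hv : LipschitzWith K v) {p : E}
    (hp : Function.Periodic v p) (s : ℝ) : Function.Semiconj (· + p) (φ s) (φ s) := by
  intro x
  have hγ : IsIntegralCurve (fun s => φ s x + p) (fun _ => v) := fun τ =>
    ((hφ x τ).add_const p).congr_deriv (hp _).symm
  simpa using (hφ.eq_of_isIntegralCurve hv hγ s).symm

end IsFlowOf

end LipschitzFlow

section ExponentialMean

variable {F : Type*} [NormedAddCommGroup F] [NormedSpace ℝ F] {l : ℝ}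

lemma integral_expMeasure (hl : 0 < l) (f : ℝ → F) :
    ∫ σ, f σ ∂expMeasure l = ∫ σ in Ici 0, (l * Real.exp (-(l * σ))) • f σ := by
  have hpdf : ∀ σ, (exponentialPDF l σ).toReal • f σ =
      (Ici 0).indicator (fun σ => (l * Real.exp (-(l * σ))) • f σ) σ := fun σ => by
    by_cases hσ : 0 ≤ σ
    · rw [exponentialPDF_of_nonneg hσ, ENNReal.toReal_ofReal (by positivity),
        indicator_of_mem (mem_Ici.2 hσ)]
    · rw [exponentialPDF_of_neg (not_le.1 hσ), indicator_of_notMem (mt mem_Ici.1 hσ),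
        ENNReal.toReal_zero, zero_smul]
  rw [← integral_indicator measurableSet_Ici]
  simp only [← hpdf]
  exact integral_withDensity_eq_integral_toReal_smul
    (measurable_exponentialPDFReal l).ennreal_ofReal (ae_of_all _ fun _ => ENNReal.ofReal_lt_top) f

lemma integral_comp_sub_expMeasure (hl : 0 < l) (h : ℝ → F) (τ : ℝ) :
    ∫ σ, h (τ - σ) ∂expMeasure l =
      Real.exp (-(l * τ)) • ∫ s in Iic τ, (l * Real.exp (l * s)) • h s := by
  rw [integral_expMeasure hl, ← integral_smul, ← integral_indicator measurableSet_Ici,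
    ← integral_indicator measurableSet_Iic, ← integral_sub_left_eq_self _ _ τ]
  congr 1 with s
  by_cases hs : s ≤ τ
  · rw [indicator_of_mem (by simpa using hs), indicator_of_mem (by simpa using hs), smul_smul,
      sub_sub_cancel, mul_left_comm, ← Real.exp_add]
    ring_nf
  · rw [indicator_of_notMem (by simpa using hs), indicator_of_notMem (by simpa using hs)]

lemma hasDerivAt_integral_Iic [CompleteSpace F] {f : ℝ → F} (hf : Continuous f)
    (hint : ∀ b, IntegrableOn f (Iic b)) (τ : ℝ) :
    HasDerivAt (fun τ => ∫ s in Iic τ, f s) (f τ) τ := by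
  have hsplit : ∀ τ, ∫ s in Iic τ, f s = (∫ s in Iic 0, f s) + ∫ s in (0 : ℝ)..τ, f s := fun τ => by
    rw [← intervalIntegral.integral_Iic_sub_Iic (hint 0) (hint τ), add_sub_cancel]
  rw [funext hsplit]
  exact (hf.integral_hasStrictDerivAt 0 τ).hasDerivAt.const_add _

lemma hasDerivAt_integral_comp_sub_expMeasure [CompleteSpace F] (hl : 0 < l) {h : ℝ → F} {B : ℝ}
    (hc : Continuous h) (hB : ∀ s, ‖h s‖ ≤ B) (τ : ℝ) :
    HasDerivAt (fun τ => ∫ σ, h (τ - σ) ∂expMeasure l)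
      (l • (h τ - ∫ σ, h (τ - σ) ∂expMeasure l)) τ := by
  have hint : ∀ b, IntegrableOn (fun s => (l * Real.exp (l * s)) • h s) (Iic b) := fun b =>
    ((integrableOn_exp_mul_Iic hl b).const_mul l).smul_bdd B hc.aestronglyMeasurable
      (ae_of_all _ hB)
  have hexp : HasDerivAt (fun τ => Real.exp (-(l * τ))) (Real.exp (-(l * τ)) * -l) τ := by
    simpa using ((hasDerivAt_id τ).const_mul l).neg.exp
  simp only [integral_comp_sub_expMeasure hl]
  refine (hexp.smul (hasDerivAt_integral_Iic (by fun_prop) hint τ)).congr_deriv ?_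
  have hcancel : Real.exp (-(l * τ)) * (l * Real.exp (l * τ)) = l := by
    rw [mul_left_comm, ← Real.exp_add, neg_add_cancel, Real.exp_zero, mul_one]
  rw [smul_smul, hcancel, mul_neg, mul_comm, neg_smul, mul_smul, smul_sub, sub_eq_add_neg]

end ExponentialMean

section InvariantGraph

variable {X : Type*} [TopologicalSpace X] {φ : Flow ℝ X} {r : ℝ → X → ℝ} {c d : X → ℝ}
  {m M κ l : ℝ}

/-- The graph of `c` is invariant under the skew product of `v' = r v x` over the flow `φ`: along
each orbit of `φ`, the values of `c` solve this equation. -/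
def IsInvariantGraph (φ : Flow ℝ X) (r : ℝ → X → ℝ) (c : X → ℝ) : Prop :=
  ∀ x s, HasDerivAt (fun s => c (φ s x)) (r (c (φ s x)) (φ s x)) s

/-- The fibre equation `v' = r v x` points into `[m, M]` at both ends and contracts there at a rate
between `κ` and `l`, uniformly in the base point `x`. -/
structure IsInwardContracting (r : ℝ → X → ℝ) (m M κ l : ℝ) : Prop where
  continuousOn : ContinuousOn (Function.uncurry r) (Icc m M ×ˢ univ)
  nonneg_left : ∀ x, 0 ≤ r m x
  nonpos_right : ∀ x, r M x ≤ 0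
  sub_mem : ∀ x, ∀ v ∈ Icc m M, ∀ w ∈ Icc m M, v ≤ w →
    r v x - r w x ∈ Icc (κ * (w - v)) (l * (w - v))

/-- One explicit Euler step of length `1 / l` for `v' = r v x`, applied fibrewise to the graph
of `c`. -/
noncomputable def eulerStep (r : ℝ → X → ℝ) (l : ℝ) (c : X → ℝ) (x : X) : ℝ :=
  c x + l⁻¹ * r (c x) x

/-- The Duhamel operator: `v' = r v x` is `v' = l * (v + r v x / l - v)`, so variation of constants
averages the Euler steps over the past of `x` against the exponential distribution of rate `l`. -/
noncomputable def duhamel (φ : Flow ℝ X) (r : ℝ → X → ℝ) (l : ℝ) (c : X → ℝ) (x : X) : ℝ :=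
  ∫ σ, eulerStep r l c (φ (-σ) x) ∂expMeasure l

namespace IsInwardContracting

lemma eulerStep_sub_mem (hr : IsInwardContracting r m M κ l) (hl : 0 < l) {x : X}
    (hc : c x ∈ Icc m M) (hd : d x ∈ Icc m M) (hcd : c x ≤ d x) :
    eulerStep r l d x - eulerStep r l c x ∈ Icc 0 ((1 - κ / l) * (d x - c x)) := by
  obtain ⟨hκ, hl'⟩ := hr.sub_mem x _ hc _ hd hcd
  have hκ' : κ / l * (d x - c x) ≤ l⁻¹ * (r (c x) x - r (d x) x) := by
    rw [div_eq_inv_mul, mul_assoc]; gcongr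
  have hl'' : l⁻¹ * (r (c x) x - r (d x) x) ≤ d x - c x := by
    rwa [inv_mul_le_iff₀ hl]
  constructor <;> simp only [eulerStep] <;> linarith

lemma eulerStep_mem (hr : IsInwardContracting r m M κ l) (hl : 0 < l) {x : X}
    (hc : c x ∈ Icc m M) : eulerStep r l c x ∈ Icc m M := by
  have hmM : m ≤ M := hc.1.trans hc.2
  have hlow := (hr.eulerStep_sub_mem (c := fun _ => m) hl (left_mem_Icc.2 hmM) hc hc.1).1
  have hup := (hr.eulerStep_sub_mem (d := fun _ => M) hl hc (right_mem_Icc.2 hmM) hc.2).1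
  have hm : 0 ≤ l⁻¹ * r m x := mul_nonneg (inv_nonneg.2 hl.le) (hr.nonneg_left x)
  have hM : l⁻¹ * r M x ≤ 0 :=
    mul_nonpos_of_nonneg_of_nonpos (inv_nonneg.2 hl.le) (hr.nonpos_right x)
  constructor <;> simp only [eulerStep] at hlow hup ⊢ <;> linarith

lemma dist_eulerStep_le (hr : IsInwardContracting r m M κ l) (hl : 0 < l) {x : X}
    (hc : c x ∈ Icc m M) (hd : d x ∈ Icc m M) :
    dist (eulerStep r l c x) (eulerStep r l d x) ≤ (1 - κ / l) * dist (c x) (d x) := by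
  wlog hcd : c x ≤ d x generalizing c d
  · rw [dist_comm, dist_comm (c x)]
    exact this hd hc (le_of_not_ge hcd)
  obtain ⟨h0, h1⟩ := hr.eulerStep_sub_mem hl hc hd hcd
  rwa [dist_comm, dist_comm (c x), Real.dist_eq, Real.dist_eq, abs_of_nonneg h0,
    abs_of_nonneg (sub_nonneg.2 hcd)]

lemma continuous_eulerStep (hr : IsInwardContracting r m M κ l) (hc : Continuous c)
    (hcI : ∀ x, c x ∈ Icc m M) : Continuous (eulerStep r l c) := by
  have hrc : Continuous fun x => r (c x) x :=
    hr.continuousOn.comp_continuous (hc.prodMk continuous_id) fun x => ⟨hcI x, mem_univ x⟩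
  exact hc.add (continuous_const.mul hrc)

lemma norm_eulerStep_le (hr : IsInwardContracting r m M κ l) (hl : 0 < l) {x : X}
    (hc : c x ∈ Icc m M) : ‖eulerStep r l c x‖ ≤ max |m| |M| :=
  abs_le_max_abs_abs (hr.eulerStep_mem hl hc).1 (hr.eulerStep_mem hl hc).2

lemma continuous_eulerStep_flow (hr : IsInwardContracting r m M κ l) (hc : Continuous c)
    (hcI : ∀ x, c x ∈ Icc m M) : Continuous fun p : ℝ × X => eulerStep r l c (φ p.1 p.2) :=
  (hr.continuous_eulerStep hc hcI).comp (φ.continuous continuous_fst continuous_snd)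

lemma integrable_eulerStep (hr : IsInwardContracting r m M κ l) (hl : 0 < l) (hc : Continuous c)
    (hcI : ∀ x, c x ∈ Icc m M) (x : X) :
    Integrable (fun σ => eulerStep r l c (φ (-σ) x)) (expMeasure l) := by
  have := isProbabilityMeasure_expMeasure hl
  exact .of_bound ((hr.continuous_eulerStep_flow hc hcI).comp
    (continuous_neg.prodMk continuous_const)).aestronglyMeasurable _
    (ae_of_all _ fun σ => hr.norm_eulerStep_le hl (hcI _))

lemma duhamel_mem (hr : IsInwardContracting r m M κ l) (hl : 0 < l) (hc : Continuous c)
    (hcI : ∀ x, c x ∈ Icc m M) (x : X) : duhamel φ r l c x ∈ Icc m M := by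
  have := isProbabilityMeasure_expMeasure hl
  exact (convex_Icc m M).integral_mem isClosed_Icc
    (ae_of_all _ fun σ => hr.eulerStep_mem hl (hcI _)) (hr.integrable_eulerStep hl hc hcI x)

lemma continuous_duhamel [FirstCountableTopology X] (hr : IsInwardContracting r m M κ l)
    (hl : 0 < l) (hc : Continuous c) (hcI : ∀ x, c x ∈ Icc m M) :
    Continuous (duhamel φ r l c) := by
  have := isProbabilityMeasure_expMeasure hl
  refine continuous_of_dominated (bound := fun _ => max |m| |M|)
    (fun x => (hr.integrable_eulerStep hl hc hcI x).aestronglyMeasurable)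
    (fun x => ae_of_all _ fun σ => hr.norm_eulerStep_le hl (hcI _)) (integrable_const _)
    (ae_of_all _ fun σ => ?_)
  exact (hr.continuous_eulerStep_flow hc hcI).comp (continuous_const.prodMk continuous_id)

lemma dist_duhamel_le (hr : IsInwardContracting r m M κ l) (hl : 0 < l)
    (hc : Continuous c) (hcI : ∀ x, c x ∈ Icc m M) (hd : Continuous d) (hdI : ∀ x, d x ∈ Icc m M)
    {D : ℝ} (hD : ∀ x, dist (c x) (d x) ≤ D) (x : X) :
    dist (duhamel φ r l c x) (duhamel φ r l d x) ≤ (1 - κ / l).toNNReal * D := by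
  have := isProbabilityMeasure_expMeasure hl
  rw [dist_eq_norm, duhamel, duhamel, ← integral_sub (hr.integrable_eulerStep hl hc hcI x)
    (hr.integrable_eulerStep hl hd hdI x)]
  have hbound : ∀ σ, ‖eulerStep r l c (φ (-σ) x) - eulerStep r l d (φ (-σ) x)‖ ≤
      (1 - κ / l).toNNReal * D := fun σ => by
    rw [← dist_eq_norm]
    calc dist (eulerStep r l c (φ (-σ) x)) (eulerStep r l d (φ (-σ) x))
        ≤ (1 - κ / l) * dist (c (φ (-σ) x)) (d (φ (-σ) x)) :=
          hr.dist_eulerStep_le hl (hcI _) (hdI _)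
      _ ≤ (1 - κ / l).toNNReal * dist (c (φ (-σ) x)) (d (φ (-σ) x)) := by
          gcongr; exact Real.le_coe_toNNReal _
      _ ≤ (1 - κ / l).toNNReal * D := by gcongr; exact hD _
  simpa using norm_integral_le_of_norm_le_const (ae_of_all (expMeasure l) hbound)

lemma isInvariantGraph_of_duhamel_eq (hr : IsInwardContracting r m M κ l) (hl : 0 < l)
    (hc : Continuous c) (hcI : ∀ x, c x ∈ Icc m M) (hfix : duhamel φ r l c = c) :
    IsInvariantGraph φ r c := by
  intro x τ
  have horbit : ∀ τ, c (φ τ x) = ∫ σ, eulerStep r l c (φ (τ - σ) x) ∂expMeasure l := fun τ => by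
    conv_lhs => rw [← hfix, duhamel]
    simp only [← φ.map_add, neg_add_eq_sub]
  have hder := hasDerivAt_integral_comp_sub_expMeasure hl
    ((hr.continuous_eulerStep_flow (φ := φ) hc hcI).comp (continuous_id.prodMk continuous_const))
    (fun s => hr.norm_eulerStep_le hl (hcI (φ s x))) τ
  simp only [Function.comp_apply, id_eq, ← horbit] at hder
  refine hder.congr_deriv ?_
  rw [eulerStep, add_sub_cancel_left, smul_eq_mul, mul_inv_cancel_left₀ hl.ne']

lemma exists_isInvariantGraph [FirstCountableTopology X] (φ : Flow ℝ X)
    (hr : IsInwardContracting r m M κ l) (hmM : m ≤ M) (hκ : 0 < κ) (hl : 0 < l) :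
    ∃ c : X → ℝ, Continuous c ∧ (∀ x, c x ∈ Icc m M) ∧ IsInvariantGraph φ r c := by
  have : Nonempty (X →ᵇ Icc m M) := ⟨.const X ⟨m, left_mem_Icc.2 hmM⟩⟩
  have hcont : ∀ c : X →ᵇ Icc m M, Continuous fun x => (c x : ℝ) := fun c =>
    continuous_subtype_val.comp c.continuous
  let Φ : (X →ᵇ Icc m M) → (X →ᵇ Icc m M) := fun c =>
    .mkOfBound ⟨fun x => ⟨duhamel φ r l (fun x => c x) x, hr.duhamel_mem hl (hcont c)
      (fun x => (c x).2) x⟩, (hr.continuous_duhamel hl (hcont c) fun x => (c x).2).subtype_mk _⟩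
      (M - m) fun x y => Real.dist_le_of_mem_Icc (Subtype.coe_prop _) (Subtype.coe_prop _)
  have hΦ : ContractingWith (1 - κ / l).toNNReal Φ := by
    refine ⟨by simpa using div_pos hκ hl, LipschitzWith.of_dist_le_mul fun c d => ?_⟩
    exact (BoundedContinuousFunction.dist_le (by positivity)).2 <|
      hr.dist_duhamel_le hl (hcont c) (fun x => (c x).2) (hcont d) (fun x => (d x).2)
        fun x => BoundedContinuousFunction.dist_coe_le_dist (f := c) (g := d) x
  obtain ⟨c, hc⟩ : ∃ c, Φ c = c := ⟨_, hΦ.fixedPoint_isFixedPt⟩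
  refine ⟨fun x => c x, hcont c, fun x => (c x).2,
    hr.isInvariantGraph_of_duhamel_eq hl (hcont c) (fun x => (c x).2) <| funext fun x => ?_⟩
  exact congrArg (fun c : X →ᵇ Icc m M => (c x : ℝ)) hc

end IsInwardContracting

lemma eq_zero_of_bounded_of_mul_deriv_le {δ δ' : ℝ → ℝ} {B : ℝ} (hκ : 0 < κ)
    (hδ : ∀ s, HasDerivAt δ (δ' s) s) (hB : ∀ s, |δ s| ≤ B)
    (hdecay : ∀ s, δ s * δ' s ≤ -κ * δ s ^ 2) (s : ℝ) : δ s = 0 := by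
  have hanti : Antitone fun s => Real.exp (2 * κ * s) * δ s ^ 2 := by
    refine antitone_of_hasDerivAt_nonpos (f' := fun s =>
      2 * Real.exp (2 * κ * s) * (κ * δ s ^ 2 + δ s * δ' s)) (fun s => ?_) fun s => ?_
    · refine (((hasDerivAt_id s).const_mul (2 * κ)).exp.mul ((hδ s).pow 2)).congr_deriv ?_
      simp only [id_eq, Pi.pow_apply]
      ring
    · exact mul_nonpos_of_nonneg_of_nonpos (by positivity) (by linarith [hdecay s])
  have hbot : Tendsto (fun t => Real.exp (2 * κ * t) * B ^ 2) atBot (𝓝 0) := by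
    simpa using (Real.tendsto_exp_atBot.comp
      (tendsto_id.const_mul_atBot (show 0 < 2 * κ by positivity))).mul_const (B ^ 2)
  have hle : Real.exp (2 * κ * s) * δ s ^ 2 ≤ 0 := by
    refine ge_of_tendsto hbot ((eventually_le_atBot s).mono fun t hts => (hanti hts).trans ?_)
    exact mul_le_mul_of_nonneg_left (sq_le_sq' (abs_le.1 (hB t)).1 (abs_le.1 (hB t)).2)
      (Real.exp_pos _).le
  exact pow_eq_zero_iff two_ne_zero |>.1 <|
    le_antisymm (nonpos_of_mul_nonpos_right hle (Real.exp_pos _)) (sq_nonneg _)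

namespace IsInvariantGraph

lemma eq_of_isInwardContracting (hc : IsInvariantGraph φ r c) (hd : IsInvariantGraph φ r d)
    (hr : IsInwardContracting r m M κ l) (hκ : 0 < κ) (hcI : ∀ x, c x ∈ Icc m M)
    (hdI : ∀ x, d x ∈ Icc m M) : c = d := by
  funext x
  have hdecay : ∀ y, (c y - d y) * (r (c y) y - r (d y) y) ≤ -κ * (c y - d y) ^ 2 := by
    intro y
    rcases le_total (c y) (d y) with h | h
    · nlinarith [(hr.sub_mem y _ (hcI y) _ (hdI y) h).1]
    · nlinarith [(hr.sub_mem y _ (hdI y) _ (hcI y) h).1]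
  have hzero := eq_zero_of_bounded_of_mul_deriv_le hκ (fun s => (hc x s).sub (hd x s))
    (fun s => Real.dist_le_of_mem_Icc (hcI _) (hdI _)) (fun s => hdecay _) 0
  simpa [sub_eq_zero] using hzero

lemma comp_semiconj (hc : IsInvariantGraph φ r c) {σ : X → X}
    (hσ : ∀ s, Function.Semiconj σ (φ s) (φ s)) (hr : ∀ v x, r v (σ x) = r v x) :
    IsInvariantGraph φ r (c ∘ σ) := fun x s => by
  simpa only [Function.comp_apply, (hσ _).eq, ← hr _ (φ s x)] using hc (σ x) s

end IsInvariantGraph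

end InvariantGraph

section Periodic

variable {F : Type*} [NormedAddCommGroup F] [NormedSpace ℝ F] {T : ℝ}

lemma periodic_deriv_s15 {f : ℝ → F} (hf : Function.Periodic f T) :
    Function.Periodic (deriv f) T := fun t => by
  rw [← deriv_comp_add_const, funext hf]

lemma exists_lipschitzWith_of_periodic {f : ℝ → F} (hf : ContDiff ℝ 1 f) (hT : T ≠ 0)
    (hper : Function.Periodic f T) : ∃ K, LipschitzWith K f := by
  obtain ⟨B, hB⟩ := ((periodic_deriv_s15 hper).isBounded_of_continuous hT
    hf.continuous_deriv_one).exists_norm_le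
  exact ⟨B.toNNReal, lipschitzWith_of_nnnorm_deriv_le (hf.differentiable one_ne_zero) fun t =>
    NNReal.le_toNNReal_of_coe_le (hB _ (mem_range_self t))⟩

lemma sInf_image_Icc_le_of_periodic {f : ℝ → ℝ} (hf : Continuous f) (hT : 0 < T)
    (hper : Function.Periodic f T) (t : ℝ) : sInf (f '' Icc 0 T) ≤ f t := by
  have hrange : f '' Icc 0 T = range f := by simpa using hper.image_Icc hT 0
  exact csInf_le (isCompact_Icc.image hf).bddBelow (hrange ▸ mem_range_self t)

end Periodic

section NormalForm

/-- The rate of change of `c` along the flow of `t' = A t` which makes `x = -c * A` a solution of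
`x * x' = A + x`; the coefficient `b` stands for `A'`. -/
noncomputable def profileRate {X : Type*} (b : X → ℝ) (v : ℝ) (x : X) : ℝ :=
  v⁻¹ - 1 - b x * v

lemma profileRate_sub {X : Type*} (b : X → ℝ) {v w : ℝ} (hv : v ≠ 0) (hw : w ≠ 0) (x : X) :
    profileRate b v x - profileRate b w x = (v⁻¹ * w⁻¹ + b x) * (w - v) := by
  simp only [profileRate]
  field_simp
  ring

-- The upper end `2` is where `-1/4` comes from: `1 / (v * w) ≥ 1/4` for `v, w ≤ 2`.
lemma isInwardContracting_profileRate {X : Type*} [TopologicalSpace X] {b : X → ℝ} {a : ℝ}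
    {K : ℝ≥0} (hb : Continuous b) (hbK : ∀ x, |b x| ≤ K) (hab : ∀ x, a ≤ b x)
    (ha : -(1 / 4) < a) :
    IsInwardContracting (profileRate b) (1 + K : ℝ)⁻¹ 2 (a + 1 / 4) ((1 + K) ^ 2 + K) where
  continuousOn := by
    have hne : ∀ p ∈ Icc (1 + K : ℝ)⁻¹ 2 ×ˢ (univ : Set X), p.1 ≠ 0 := fun p hp =>
      ((by positivity : 0 < (1 + K : ℝ)⁻¹).trans_le hp.1.1).ne'
    exact ((continuousOn_fst.inv₀ hne).sub continuousOn_const).sub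
      (((hb.comp continuous_snd).mul continuous_fst).continuousOn)
  nonneg_left x := by
    have hx : b x * (1 + K : ℝ)⁻¹ ≤ K := by
      rw [← div_eq_mul_inv, div_le_iff₀ (by positivity)]
      nlinarith [(le_abs_self _).trans (hbK x), K.coe_nonneg]
    simp only [profileRate, inv_inv]
    linarith
  nonpos_right x := by
    simp only [profileRate]
    linarith [hab x]
  sub_mem x v hv w hw hvw := by
    have hK : 0 < (1 + K : ℝ)⁻¹ := by positivity
    have hv0 : 0 < v := hK.trans_le hv.1
    have hw0 : 0 < w := hK.trans_le hw.1
    have hlow : 1 / 4 ≤ v⁻¹ * w⁻¹ :=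
      calc (1 / 4 : ℝ) = 2⁻¹ * 2⁻¹ := by norm_num
        _ ≤ v⁻¹ * w⁻¹ := by gcongr; exacts [hv.2, hw.2]
    have hup : v⁻¹ * w⁻¹ ≤ (1 + K) ^ 2 := by
      rw [sq]
      gcongr
      exacts [inv_le_of_inv_le₀ (by positivity) hv.1, inv_le_of_inv_le₀ (by positivity) hw.1]
    rw [profileRate_sub b hv0.ne' hw0.ne']
    have hwv : 0 ≤ w - v := sub_nonneg.2 hvw
    exact ⟨mul_le_mul_of_nonneg_right (by linarith [hab x]) hwv,
      mul_le_mul_of_nonneg_right (add_le_add hup ((le_abs_self _).trans (hbK x))) hwv⟩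

-- Off the zeros of `A`, orbits are local parametrizations of the line.
lemma hasDerivAt_of_isIntegralCurve {F : Type*} [NormedAddCommGroup F] [NormedSpace ℝ F]
    {A : ℝ → ℝ} {c : ℝ → F} {γ : ℝ → ℝ} {d : F} {s : ℝ} (hA : Continuous A)
    (hγ : IsIntegralCurve γ (fun _ => A)) (hc : HasDerivAt (fun τ => c (γ τ)) d s)
    (hs : A (γ s) ≠ 0) : HasDerivAt c ((A (γ s))⁻¹ • d) (γ s) := by
  have hstrict : HasStrictDerivAt γ (A (γ s)) s :=
    hasStrictDerivAt_of_hasDerivAt_of_continuousAt (f' := fun τ => A (γ τ))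
      (.of_forall hγ) (hA.comp hγ.continuous).continuousAt
  have hinv := (hstrict.to_localInverse hs).hasDerivAt
  have himg : hstrict.localInverse γ (A (γ s)) s hs (γ s) = s :=
    HasStrictFDerivAt.localInverse_apply_image _
  have hright : ∀ᶠ y in 𝓝 (γ s), γ (hstrict.localInverse γ (A (γ s)) s hs y) = y :=
    HasStrictFDerivAt.eventually_right_inverse _
  rw [← himg] at hc
  exact (hc.scomp (γ s) hinv).congr_of_eventuallyEq (hright.mono fun y hy => by
    simp only [Function.comp_apply, hy])

lemma hasDerivAt_mul_of_eq_zero {c A : ℝ → ℝ} {a t : ℝ} (hc : ContinuousAt c t)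
    (hA : HasDerivAt A a t) (ht : A t = 0) : HasDerivAt (fun s => c s * A s) (c t * a) t := by
  rw [hasDerivAt_iff_tendsto_slope] at hA ⊢
  refine ((hc.tendsto.mono_left nhdsWithin_le_nhds).mul hA).congr fun s => ?_
  simp only [slope_def_field, ht]
  ring

namespace IsInvariantGraph

variable {A c : ℝ → ℝ} {φ : Flow ℝ ℝ} {K : ℝ≥0}

lemma hasDerivAt_neg_mul (hA : ContDiff ℝ 1 A) (hLip : LipschitzWith K A)
    (hφ : IsFlowOf φ A) (hc : Continuous c) (hpos : ∀ t, 0 < c t)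
    (hcφ : IsInvariantGraph φ (profileRate (deriv A)) c) (t : ℝ) :
    HasDerivAt (fun t => -(c t * A t)) (1 - (c t)⁻¹) t := by
  have hct : c t ≠ 0 := (hpos t).ne'
  have hAt : HasDerivAt A (deriv A t) t := (hA.differentiable one_ne_zero t).hasDerivAt
  have horbit : HasDerivAt (fun s => c (φ s t)) (profileRate (deriv A) (c t) t) 0 := by
    simpa using hcφ t 0
  by_cases ht : A t = 0
  · have hrest : profileRate (deriv A) (c t) t = 0 :=
      horbit.unique (by simpa only [hφ.apply_eq_self hLip ht] using hasDerivAt_const (0 : ℝ) (c t))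
    refine (hasDerivAt_mul_of_eq_zero hc.continuousAt hAt ht).neg.congr_deriv ?_
    rw [profileRate] at hrest
    linarith
  · have hc' : HasDerivAt c ((A t)⁻¹ • profileRate (deriv A) (c t) t) t := by
      simpa using hasDerivAt_of_isIntegralCurve hA.continuous (hφ t) horbit (by simpa using ht)
    refine (hc'.mul hAt).neg.congr_deriv ?_
    rw [profileRate, smul_eq_mul]
    field_simp
    ring

lemma contDiff_neg_mul (hA : ContDiff ℝ 1 A) (hLip : LipschitzWith K A) (hφ : IsFlowOf φ A)
    (hc : Continuous c) (hpos : ∀ t, 0 < c t)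
    (hcφ : IsInvariantGraph φ (profileRate (deriv A)) c) :
    ContDiff ℝ 1 fun t => -(c t * A t) := by
  have hx := hcφ.hasDerivAt_neg_mul hA hLip hφ hc hpos
  refine contDiff_one_iff_deriv.2 ⟨fun t => (hx t).differentiableAt, ?_⟩
  rw [funext fun t => (hx t).deriv]
  exact continuous_const.sub (hc.inv₀ fun t => (hpos t).ne')

lemma neg_mul_mul_deriv_neg_mul (hA : ContDiff ℝ 1 A) (hLip : LipschitzWith K A)
    (hφ : IsFlowOf φ A) (hc : Continuous c) (hpos : ∀ t, 0 < c t)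
    (hcφ : IsInvariantGraph φ (profileRate (deriv A)) c) (t : ℝ) :
    -(c t * A t) * deriv (fun t => -(c t * A t)) t = A t + -(c t * A t) := by
  have hct : c t ≠ 0 := (hpos t).ne'
  rw [(hcφ.hasDerivAt_neg_mul hA hLip hφ hc hpos t).deriv]
  field_simp
  ring

end IsInvariantGraph

theorem normal_form_periodic_solution_exists_general {A : ℝ → ℝ} {K : ℝ≥0} {a : ℝ}
    (hA : ContDiff ℝ 1 A) (hLip : LipschitzWith K A) (ha : -(1 / 4) < a)
    (hA' : ∀ t, a ≤ deriv A t) :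
    ∃ x : ℝ → ℝ, ContDiff ℝ 1 x ∧ (∀ T, Function.Periodic A T → Function.Periodic x T) ∧
      (∀ t : ℝ, x t * deriv x t = A t + x t) ∧
      (∀ t : ℝ, 0 < A t → x t < 0) ∧
      (∀ t : ℝ, A t < 0 → 0 < x t) ∧
      (∀ t : ℝ, x t = 0 ↔ A t = 0) := by
  obtain ⟨φ, hφ⟩ := exists_isFlowOf hA hLip
  have hr := isInwardContracting_profileRate hA.continuous_deriv_one
    (fun t => norm_deriv_le_of_lipschitz hLip) hA' ha
  obtain ⟨c, hc, hcI, hcφ⟩ := hr.exists_isInvariantGraph φ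
    ((inv_le_one_of_one_le₀ (by simp)).trans one_le_two) (by linarith) (by positivity)
  have hpos : ∀ t, 0 < c t := fun t => (by positivity : 0 < (1 + (K : ℝ))⁻¹).trans_le (hcI t).1
  have hper : ∀ T, Function.Periodic A T → Function.Periodic c T := fun T hT => by
    have htrans : IsInvariantGraph φ (profileRate (deriv A)) (c ∘ (· + T)) :=
      hcφ.comp_semiconj (hφ.semiconj_add_const hLip hT) fun v t => by
        rw [profileRate, profileRate, periodic_deriv_s15 hT]
    exact congrFun <| htrans.eq_of_isInwardContracting hcφ hr (by linarith)
      (fun t => hcI (t + T)) hcI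
  exact ⟨fun t => -(c t * A t), hcφ.contDiff_neg_mul hA hLip hφ hc hpos,
    fun T hT => ((hper T hT).mul hT).comp Neg.neg,
    hcφ.neg_mul_mul_deriv_neg_mul hA hLip hφ hc hpos,
    fun t ht => neg_neg_of_pos (mul_pos (hpos t) ht),
    fun t ht => neg_pos.2 (mul_neg_of_pos_of_neg (hpos t) ht), fun t => by simp [(hpos t).ne']⟩

end NormalForm

/-- if A is C¹, T-periodic, has a zero in [0,T] and min A′ > −1/4, then the
normal form equation (NF): x·x′ = A(t) + x has a C¹, T-periodic solution with the sign of −A. -/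
theorem normal_form_periodic_solution_exists
    (T : ℝ) (hT : 0 < T) (A : ℝ → ℝ) (hA : ContDiff ℝ 1 A)
    (hAper : Function.Periodic A T)
    (hzero : ∃ t ∈ Icc (0 : ℝ) T, A t = 0)
    (hmin : sInf ((fun t => deriv A t) '' Icc (0 : ℝ) T) > -(1 / 4)) :
    ∃ x : ℝ → ℝ, ContDiff ℝ 1 x ∧ Function.Periodic x T ∧
      (∀ t : ℝ, x t * deriv x t = A t + x t) ∧
      (∀ t : ℝ, 0 < A t → x t < 0) ∧
      (∀ t : ℝ, A t < 0 → 0 < x t) ∧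
      (∀ t : ℝ, x t = 0 ↔ A t = 0) := by
  obtain ⟨K, hLip⟩ := exists_lipschitzWith_of_periodic hA hT.ne' hAper
  obtain ⟨x, hx, hxper, hsol⟩ := normal_form_periodic_solution_exists_general hA hLip hmin
    (sInf_image_Icc_le_of_periodic hA.continuous_deriv_one hT (periodic_deriv_s15 hAper))
  exact ⟨x, hx, hxper T hAper, hsol⟩
end
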